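/- Let m, n be coprime integers with m ≥ 2 and n ≥ 2. Let S be the set of pairs of integers (k, k') with 1 ≤ k < k' ≤ mn − 1 such that none of k, k', k' − k is divisible by m, and at least one but not all three of k, k', k' − k are divisible by n. Then 2·|S| = 3(n − 1)(m − 1)(m − 2). -/

import Mathlib

def TT (m n : ℕ) : Finset (ℕ × ℕ) :=
  (Finset.range (m * n) ×ˢ Finset.range (m * n)).filter fun p =>
    (p.1 % m ≠ 0 ∧ p.2 % m ≠ 0 ∧ p.1 % m ≠ p.2 % m) ∧
    (p.1 % n = 0 ∨ p.2 % n = 0 ∨ p.1 % n = p.2 % n) ∧ ¬ (p.1 % n = 0 ∧ p.2 % n = 0)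

def BB (n : ℕ) : Finset (ℕ × ℕ) :=
  (Finset.range n ×ˢ Finset.range n).filter fun p =>
    (p.1 = 0 ∨ p.2 = 0 ∨ p.1 = p.2) ∧ ¬ (p.1 = 0 ∧ p.2 = 0)

theorem BB_card (n : ℕ) : (BB n).card = 3 * (n - 1) := by
  have h : BB n = ((Finset.Icc 1 (n-1)).image (fun b => ((0:ℕ), b)) ∪
      (Finset.Icc 1 (n-1)).image (fun b => (b, (0:ℕ)))) ∪
      (Finset.Icc 1 (n-1)).image (fun b => (b, b)) := by
    ext ⟨a, b⟩
    simp only [BB, Finset.mem_filter, Finset.mem_product, Finset.mem_range, Finset.mem_union,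
      Finset.mem_image, Finset.mem_Icc, Prod.mk.injEq]
    constructor
    · rintro ⟨⟨h1, h2⟩, h3, h4⟩
      rcases h3 with h3 | h3 | h3
      · exact Or.inl (Or.inl ⟨b, by omega, by omega, rfl⟩)
      · exact Or.inl (Or.inr ⟨a, by omega, rfl, by omega⟩)
      · exact Or.inr ⟨a, by omega, rfl, by omega⟩
    · rintro ((⟨c, h⟩ | ⟨c, h⟩) | ⟨c, h⟩) <;> omega
  rw [h, Finset.card_union_of_disjoint, Finset.card_union_of_disjoint,
    Finset.card_image_of_injective, Finset.card_image_of_injective,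
    Finset.card_image_of_injective]
  · simp; omega
  · intro a b h; simpa using h
  · intro a b h; simpa using h
  · intro a b h; simpa using h
  · rw [Finset.disjoint_left]
    rintro ⟨a, b⟩
    simp only [Finset.mem_image, Finset.mem_Icc, Prod.mk.injEq]
    rintro ⟨c, h⟩ ⟨d, h'⟩
    omega
  · rw [Finset.disjoint_left]
    rintro ⟨a, b⟩
    simp only [Finset.mem_union, Finset.mem_image, Finset.mem_Icc, Prod.mk.injEq]
    rintro (⟨c, h⟩ | ⟨c, h⟩) ⟨d, h'⟩ <;> omega

theorem TT_card (m n : ℕ) (hm : 2 ≤ m) (hn : 2 ≤ n) (hco : Nat.Coprime m n) :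
    (TT m n).card = ((Finset.Icc 1 (m-1)).offDiag ×ˢ BB n).card := by
  have hinj : ∀ a b, a < m * n → b < m * n → a % m = b % m → a % n = b % n → a = b := by
    intro a b ha hb h1 h2
    exact Nat.ModEq.eq_of_lt_of_lt ((Nat.modEq_and_modEq_iff_modEq_mul hco).1 ⟨h1, h2⟩) ha hb
  apply Finset.card_bij (fun p _ => ((p.1 % m, p.2 % m), (p.1 % n, p.2 % n)))
  · rintro ⟨a, b⟩ h
    have := Nat.mod_lt a (show 0 < m by omega)
    have := Nat.mod_lt b (show 0 < m by omega)
    have := Nat.mod_lt a (show 0 < n by omega)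
    have := Nat.mod_lt b (show 0 < n by omega)
    simp only [TT, BB, Finset.mem_filter, Finset.mem_product, Finset.mem_range,
      Finset.mem_offDiag, Finset.mem_Icc] at h ⊢
    omega
  · rintro ⟨a, b⟩ h ⟨c, d⟩ h'
    simp only [TT, Finset.mem_filter, Finset.mem_product, Finset.mem_range, Prod.mk.injEq] at h h' ⊢
    rintro ⟨⟨h1, h2⟩, h3, h4⟩
    exact ⟨hinj _ _ h.1.1 h'.1.1 h1 h3, hinj _ _ h.1.2 h'.1.2 h2 h4⟩
  · rintro ⟨⟨a, b⟩, ⟨c, d⟩⟩ h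
    simp only [BB, Finset.mem_filter, Finset.mem_product, Finset.mem_range,
      Finset.mem_offDiag, Finset.mem_Icc] at h
    obtain ⟨x, hx1, hx2⟩ := Nat.chineseRemainder hco a c
    obtain ⟨y, hy1, hy2⟩ := Nat.chineseRemainder hco b d
    have e1 : x % (m * n) % m = a := by
      rw [Nat.mod_mul_right_mod, hx1, Nat.mod_eq_of_lt (by omega)]
    have e2 : x % (m * n) % n = c := by
      rw [Nat.mod_mul_left_mod, hx2, Nat.mod_eq_of_lt (by omega)]
    have e3 : y % (m * n) % m = b := by
      rw [Nat.mod_mul_right_mod, hy1, Nat.mod_eq_of_lt (by omega)]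
    have e4 : y % (m * n) % n = d := by
      rw [Nat.mod_mul_left_mod, hy2, Nat.mod_eq_of_lt (by omega)]
    have hp : 0 < m * n := by positivity
    refine ⟨(x % (m * n), y % (m * n)), ?_, by simp only [e1, e2, e3, e4]⟩
    simp only [TT, Finset.mem_filter, Finset.mem_product, Finset.mem_range, e1, e2, e3, e4]
    refine ⟨⟨Nat.mod_lt _ hp, Nat.mod_lt _ hp⟩, ?_⟩
    omega

/-- For coprime `m, n ≥ 2`, let `S` be the set of pairs `1 ≤ k < k' ≤ mn - 1` such that
none of `k, k', k' - k` is divisible by `m`, and at least one but not all three of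
`k, k', k' - k` are divisible by `n`. Then `2|S| = 3(n-1)(m-1)(m-2)`. -/
theorem stmt_15 (m n : ℕ) (hm : 2 ≤ m) (hn : 2 ≤ n) (hco : Nat.Coprime m n) :
    2 * ((Finset.Icc 1 (m * n - 1) ×ˢ Finset.Icc 1 (m * n - 1)).filter fun p =>
        p.1 < p.2 ∧
        ¬ m ∣ p.1 ∧ ¬ m ∣ p.2 ∧ ¬ m ∣ (p.2 - p.1) ∧
        (n ∣ p.1 ∨ n ∣ p.2 ∨ n ∣ (p.2 - p.1)) ∧
        ¬ (n ∣ p.1 ∧ n ∣ p.2 ∧ n ∣ (p.2 - p.1))).card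
      = 3 * (n - 1) * (m - 1) * (m - 2) := by
  have hS : ((Finset.Icc 1 (m * n - 1) ×ˢ Finset.Icc 1 (m * n - 1)).filter fun p =>
        p.1 < p.2 ∧
        ¬ m ∣ p.1 ∧ ¬ m ∣ p.2 ∧ ¬ m ∣ (p.2 - p.1) ∧
        (n ∣ p.1 ∨ n ∣ p.2 ∨ n ∣ (p.2 - p.1)) ∧
        ¬ (n ∣ p.1 ∧ n ∣ p.2 ∧ n ∣ (p.2 - p.1))) = (TT m n).filter (fun p => p.1 < p.2) := by
    ext ⟨a, b⟩
    simp only [TT, Finset.mem_filter, Finset.mem_product, Finset.mem_range, Finset.mem_Icc]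
    by_cases hab : a < b
    · have h1 : m ∣ b - a ↔ a % m = b % m := (Nat.modEq_iff_dvd' hab.le).symm
      have h2 : n ∣ b - a ↔ a % n = b % n := (Nat.modEq_iff_dvd' hab.le).symm
      have h0 : a = 0 → a % m = 0 := by rintro rfl; simp
      rw [h1, h2]
      simp only [Nat.dvd_iff_mod_eq_zero]
      generalize m * n = N at *
      omega
    · simp [hab]
  have hsw : ((TT m n).filter (fun p => ¬ p.1 < p.2)).card
      = ((TT m n).filter (fun p => p.1 < p.2)).card := by
    apply Finset.card_bij (fun p _ => p.swap)
    · rintro ⟨a, b⟩ h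
      simp only [TT, Finset.mem_filter, Finset.mem_product, Finset.mem_range, Prod.swap] at h ⊢
      have : a ≠ b := by rintro rfl; exact h.1.2.1.2.2 rfl
      generalize m * n = N at *
      omega
    · intro p _ q _ h
      exact Prod.swap_injective h
    · rintro ⟨a, b⟩ h
      refine ⟨(b, a), ?_, rfl⟩
      simp only [TT, Finset.mem_filter, Finset.mem_product, Finset.mem_range] at h ⊢
      generalize m * n = N at *
      omega
  have hT := TT_card m n hm hn hco
  rw [← Finset.card_filter_add_card_filter_not (fun p : ℕ × ℕ => p.1 < p.2), hsw] at hT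
  rw [hS, two_mul, hT, Finset.card_product, BB_card, Finset.offDiag_card, Nat.card_Icc]
  obtain ⟨k, rfl⟩ := Nat.exists_eq_add_of_le hm
  have e1 : 2 + k - 1 + 1 - 1 = k + 1 := by omega
  have e2 : 2 + k - 1 = k + 1 := by omega
  have e3 : 2 + k - 2 = k := by omega
  have e4 : (k + 1) * (k + 1) - (k + 1) = (k + 1) * k := by
    rw [Nat.sub_eq_iff_eq_add (by nlinarith)]; ring
  rw [e1, e2, e3, e4]
  ring
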